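/- arXiv:1408.6036 — 7 statements merged into one kernel-verified Lean document; each statement's English description precedes it below -/
import Mathlib

section
/- Let c : [0, π] → ℝⁿ be a twice continuously differentiable curve and define c̄(t) := c(0)·cos t + ċ(0)·sin t, so that c̄'(t) = −c(0)·sin t + ċ(0)·cos t. Then for every t ∈ [0, π], √(‖c(t) − c̄(t)‖² + ‖ċ(t) − c̄'(t)‖²) ≤ e^π · ∫₀^π e^{−θ} ‖c̈(θ) + c(θ)‖ dθ. In particular ‖c(t) − c̄(t)‖ ≤ e^π · ∫₀^π e^{−θ} ‖c̈(θ) + c(θ)‖ dθ for all t ∈ [0, π]. -/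
open Real

set_option maxHeartbeats 1000000 in
theorem stmt_2_aux {E : Type*} [NormedAddCommGroup E] [InnerProductSpace ℝ E]
    [CompleteSpace E] (c c' c'' : ℝ → E)
    (hc' : ∀ t ∈ Set.Icc (0:ℝ) π, HasDerivWithinAt c (c' t) (Set.Icc 0 π) t)
    (hc'' : ∀ t ∈ Set.Icc (0:ℝ) π, HasDerivWithinAt c' (c'' t) (Set.Icc 0 π) t)
    (hcont : ContinuousOn c'' (Set.Icc 0 π)) :
    ∀ t ∈ Set.Icc (0:ℝ) π,
      (Real.sqrt (‖c t - (Real.cos t • c 0 + Real.sin t • c' 0)‖ ^ 2 +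
          ‖c' t - (-Real.sin t • c 0 + Real.cos t • c' 0)‖ ^ 2) ≤
        Real.exp π * ∫ θ in (0:ℝ)..π, Real.exp (-θ) * ‖c'' θ + c θ‖) ∧
      ‖c t - (Real.cos t • c 0 + Real.sin t • c' 0)‖ ≤
        Real.exp π * ∫ θ in (0:ℝ)..π, Real.exp (-θ) * ‖c'' θ + c θ‖ := by
  intro t ht
  have key : Real.sqrt (‖c t - (Real.cos t • c 0 + Real.sin t • c' 0)‖ ^ 2 +
          ‖c' t - (-Real.sin t • c 0 + Real.cos t • c' 0)‖ ^ 2) ≤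
        Real.exp π * ∫ θ in (0:ℝ)..π, Real.exp (-θ) * ‖c'' θ + c θ‖ := by
    have hcc : ContinuousOn c (Set.Icc 0 π) := fun s hs => (hc' s hs).continuousWithinAt
    have hcc' : ContinuousOn c' (Set.Icc 0 π) := fun s hs => (hc'' s hs).continuousWithinAt
    have hf : ContinuousOn (fun s => c'' s + c s) (Set.Icc 0 π) := hcont.add hcc
    let L := (WithLp.prodContinuousLinearEquiv 2 ℝ E E).symm
    let P : ℝ → WithLp 2 (E × E) := fun s =>
      L (cos s • c s - sin s • c' s, sin s • c s + cos s • c' s)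
    let Q : ℝ → WithLp 2 (E × E) := fun s =>
      L (-sin s • (c'' s + c s), cos s • (c'' s + c s))
    have hP : ∀ s ∈ Set.Icc (0:ℝ) π, HasDerivWithinAt P (Q s) (Set.Icc 0 π) s := by
      intro s hs
      have h1 := hc' s hs
      have h2 := hc'' s hs
      have hco := (Real.hasDerivAt_cos s).hasDerivWithinAt (s := Set.Icc 0 π)
      have hsi := (Real.hasDerivAt_sin s).hasDerivWithinAt (s := Set.Icc 0 π)
      have hA := ((hco.smul h1).sub (hsi.smul h2)).prodMk ((hsi.smul h1).add (hco.smul h2))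
      have hB := L.toContinuousLinearMap.hasFDerivAt.comp_hasDerivWithinAt s hA
      refine hB.congr_deriv ?_
      change L _ = L _
      congr 2 <;> module
    have hQ : ContinuousOn Q (Set.Icc 0 π) := by
      refine L.continuous.comp_continuousOn (ContinuousOn.prodMk ?_ ?_)
      · exact (Real.continuous_sin.neg.continuousOn).smul hf
      · exact (Real.continuous_cos.continuousOn).smul hf
    have hsub : Set.Icc 0 t ⊆ Set.Icc 0 π := Set.Icc_subset_Icc_right ht.2
    have hQn : ∀ s, ‖Q s‖ = ‖c'' s + c s‖ := by
      intro s
      have h : ‖Q s‖ ^ 2 = ‖c'' s + c s‖ ^ 2 := by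
        rw [WithLp.prod_norm_sq_eq_of_L2]
        change ‖-sin s • (c'' s + c s)‖ ^ 2 + ‖cos s • (c'' s + c s)‖ ^ 2 = _
        rw [norm_smul, norm_smul, mul_pow, mul_pow, Real.norm_eq_abs, Real.norm_eq_abs, sq_abs,
          sq_abs]
        linear_combination ‖c'' s + c s‖ ^ 2 * Real.sin_sq_add_cos_sq s
      exact (sq_eq_sq₀ (norm_nonneg _) (norm_nonneg _)).1 h
    have hFTC : ∫ s in (0:ℝ)..t, Q s = P t - P 0 := by
      apply intervalIntegral.integral_eq_sub_of_hasDerivAt_of_le ht.1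
      · exact fun s hs => (hP s (hsub hs)).continuousWithinAt.mono hsub
      · intro s hs
        exact (hP s (hsub ⟨hs.1.le, hs.2.le⟩)).hasDerivAt
          (Icc_mem_nhds hs.1 (hs.2.trans_le ht.2))
      · exact (hQ.mono hsub).intervalIntegrable_of_Icc ht.1
    have hnorm : Real.sqrt (‖c t - (Real.cos t • c 0 + Real.sin t • c' 0)‖ ^ 2 +
          ‖c' t - (-Real.sin t • c 0 + Real.cos t • c' 0)‖ ^ 2) = ‖P t - P 0‖ := by
      rw [← Real.sqrt_sq (norm_nonneg (P t - P 0))]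
      congr 1
      rw [WithLp.prod_norm_sq_eq_of_L2]
      change _ = ‖(cos t • c t - sin t • c' t) - (cos 0 • c 0 - sin 0 • c' 0)‖ ^ 2 +
        ‖(sin t • c t + cos t • c' t) - (sin 0 • c 0 + cos 0 • c' 0)‖ ^ 2
      have hsc := Real.sin_sq_add_cos_sq t
      set x := c t - (Real.cos t • c 0 + Real.sin t • c' 0) with hx
      set y := c' t - (-Real.sin t • c 0 + Real.cos t • c' 0) with hy
      have e1 : (cos t • c t - sin t • c' t) - (cos 0 • c 0 - sin 0 • c' 0)
          = cos t • x - sin t • y := by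
        rw [hx, hy, Real.cos_zero, Real.sin_zero]
        have h1 : (sin t ^ 2 + cos t ^ 2) • c 0 = (1:ℝ) • c 0 := by rw [hsc]
        linear_combination (norm := module) h1
      have e2 : (sin t • c t + cos t • c' t) - (sin 0 • c 0 + cos 0 • c' 0)
          = sin t • x + cos t • y := by
        rw [hx, hy, Real.cos_zero, Real.sin_zero]
        have h1 : (sin t ^ 2 + cos t ^ 2) • c' 0 = (1:ℝ) • c' 0 := by rw [hsc]
        linear_combination (norm := module) h1
      rw [e1, e2]
      clear_value x y
      rw [norm_sub_sq_real (cos t • x), norm_add_sq_real (sin t • x)]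
      simp only [norm_smul, mul_pow, Real.norm_eq_abs, sq_abs, real_inner_smul_left,
        real_inner_smul_right]
      linear_combination (-‖x‖ ^ 2 - ‖y‖ ^ 2) * hsc
    rw [hnorm, ← hFTC]
    have hpi := Real.pi_pos.le
    calc ‖∫ s in (0:ℝ)..t, Q s‖ ≤ ∫ s in (0:ℝ)..t, ‖Q s‖ :=
          intervalIntegral.norm_integral_le_integral_norm ht.1
      _ ≤ ∫ s in (0:ℝ)..π, ‖Q s‖ := by
          apply intervalIntegral.integral_mono_interval le_rfl ht.1 ht.2
          · exact Filter.Eventually.of_forall fun s => norm_nonneg _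
          · exact hQ.norm.intervalIntegrable_of_Icc hpi
      _ ≤ ∫ s in (0:ℝ)..π, Real.exp π * (Real.exp (-s) * ‖c'' s + c s‖) := by
          apply intervalIntegral.integral_mono_on hpi
          · exact hQ.norm.intervalIntegrable_of_Icc hpi
          · apply ContinuousOn.intervalIntegrable_of_Icc hpi
            exact continuousOn_const.mul
              ((Real.continuous_exp.comp continuous_neg).continuousOn.mul hf.norm)
          · intro s hs
            rw [hQn, ← mul_assoc, ← Real.exp_add]
            exact le_mul_of_one_le_left (norm_nonneg _)
              (Real.one_le_exp (by linarith [hs.2]))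
      _ = _ := intervalIntegral.integral_const_mul _ _
  refine ⟨key, le_trans (Real.le_sqrt_of_sq_le ?_) key⟩
  exact le_add_of_nonneg_right (sq_nonneg _)

theorem stmt_2 {n : ℕ} (c c' c'' : ℝ → EuclideanSpace ℝ (Fin n))
    (hc' : ∀ t ∈ Set.Icc (0:ℝ) π, HasDerivWithinAt c (c' t) (Set.Icc 0 π) t)
    (hc'' : ∀ t ∈ Set.Icc (0:ℝ) π, HasDerivWithinAt c' (c'' t) (Set.Icc 0 π) t)
    (hcont : ContinuousOn c'' (Set.Icc 0 π)) :
    ∀ t ∈ Set.Icc (0:ℝ) π,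
      (Real.sqrt (‖c t - (Real.cos t • c 0 + Real.sin t • c' 0)‖ ^ 2 +
          ‖c' t - (-Real.sin t • c 0 + Real.cos t • c' 0)‖ ^ 2) ≤
        Real.exp π * ∫ θ in (0:ℝ)..π, Real.exp (-θ) * ‖c'' θ + c θ‖) ∧
      ‖c t - (Real.cos t • c 0 + Real.sin t • c' 0)‖ ≤
        Real.exp π * ∫ θ in (0:ℝ)..π, Real.exp (-θ) * ‖c'' θ + c θ‖ := by
  exact stmt_2_aux c c' c'' hc' hc'' hcont
end

section
/- Let α = 1 − 1/√2 and let c : [0, π] → ℝⁿ be a differentiable curve with ‖c(t)‖ = 1 for all t ∈ [0, π], ⟨c(0), ċ(0)⟩ = 0, and ‖c(t) − c̄(t)‖ ≤ α for all t ∈ [0, π]. Then ⟨c̄(θ), c(θ)⟩ > 0 for every θ ∈ [0, π]. -/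
open Real
open scoped RealInnerProductSpace

theorem stmt_6 {n : ℕ} (c c' : ℝ → EuclideanSpace ℝ (Fin n))
    (hd : ∀ t ∈ Set.Icc (0:ℝ) π, HasDerivWithinAt c (c' t) (Set.Icc 0 π) t)
    (hunit : ∀ t ∈ Set.Icc (0:ℝ) π, ‖c t‖ = 1)
    (horth : ⟪c 0, c' 0⟫ = 0)
    (hclose : ∀ t ∈ Set.Icc (0:ℝ) π,
      ‖c t - (Real.cos t • c 0 + Real.sin t • c' 0)‖ ≤ 1 - 1 / Real.sqrt 2) :
    ∀ θ ∈ Set.Icc (0:ℝ) π,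
      0 < ⟪Real.cos θ • c 0 + Real.sin θ • c' 0, c θ⟫ := by
  intro θ hθ
  have h1 := hunit θ hθ
  have h2 := hclose θ hθ
  generalize Real.cos θ • c 0 + Real.sin θ • c' 0 = x at h2 ⊢
  have h3 := real_inner_le_norm (c θ - x) (c θ)
  rw [inner_sub_left, real_inner_self_eq_norm_sq, h1] at h3
  have h4 : 0 < 1 / Real.sqrt 2 := by positivity
  linarith
end

section
/- Let c : [0, π] → ℝⁿ be a twice continuously differentiable curve with ‖c(t)‖ = 1 for all t ∈ [0, π], and suppose ∫₀^π e^{−θ} ‖c̈(θ) + c(θ)‖ dθ ≤ e^{−π} · (1 − 1/√2). Then ⟨c̄(t), c(t)⟩ > 0 for every t ∈ [0, π]. -/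
open Real
open scoped RealInnerProductSpace

theorem stmt_7 {n : ℕ} (c c' c'' : ℝ → EuclideanSpace ℝ (Fin n))
    (hc' : ∀ t ∈ Set.Icc (0:ℝ) π, HasDerivWithinAt c (c' t) (Set.Icc 0 π) t)
    (hc'' : ∀ t ∈ Set.Icc (0:ℝ) π, HasDerivWithinAt c' (c'' t) (Set.Icc 0 π) t)
    (hcont : ContinuousOn c'' (Set.Icc 0 π))
    (hunit : ∀ t ∈ Set.Icc (0:ℝ) π, ‖c t‖ = 1)
    (hint : ∫ θ in (0:ℝ)..π, Real.exp (-θ) * ‖c'' θ + c θ‖ ≤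
      Real.exp (-π) * (1 - 1 / Real.sqrt 2)) :
    ∀ t ∈ Set.Icc (0:ℝ) π,
      0 < ⟪Real.cos t • c 0 + Real.sin t • c' 0, c t⟫ := by
  intro t ht
  have hsub : Set.Icc (0:ℝ) t ⊆ Set.Icc 0 π := Set.Icc_subset_Icc le_rfl ht.2
  have hcc : ContinuousOn c (Set.Icc 0 π) := fun x hx => (hc' x hx).continuousWithinAt
  have hcc' : ContinuousOn c' (Set.Icc 0 π) := fun x hx => (hc'' x hx).continuousWithinAt
  have hg : ContinuousOn (fun θ => ‖c'' θ + c θ‖) (Set.Icc 0 π) := (hcont.add hcc).norm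
  have heg : ContinuousOn (fun θ => Real.exp (-θ) * ‖c'' θ + c θ‖) (Set.Icc 0 π) :=
    ContinuousOn.mul (by fun_prop) hg
  have hgint : IntervalIntegrable (fun θ => ‖c'' θ + c θ‖) MeasureTheory.volume 0 t :=
    (hg.mono hsub).intervalIntegrable_of_Icc ht.1
  have hegint : IntervalIntegrable (fun θ => Real.exp (-θ) * ‖c'' θ + c θ‖)
      MeasureTheory.volume 0 π := heg.intervalIntegrable_of_Icc Real.pi_pos.le
  have hegint' : IntervalIntegrable (fun θ => Real.exp (-θ) * ‖c'' θ + c θ‖)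
      MeasureTheory.volume 0 t := (heg.mono hsub).intervalIntegrable_of_Icc ht.1
  have h1 : ∫ θ in (0:ℝ)..t, Real.exp (-π) * ‖c'' θ + c θ‖ ≤
      ∫ θ in (0:ℝ)..t, Real.exp (-θ) * ‖c'' θ + c θ‖ := by
    apply intervalIntegral.integral_mono_on ht.1 (hgint.const_mul _) hegint'
    intro x hx
    have := (hsub hx).2
    gcongr
  have h2 : ∫ θ in (0:ℝ)..t, Real.exp (-θ) * ‖c'' θ + c θ‖ ≤
      ∫ θ in (0:ℝ)..π, Real.exp (-θ) * ‖c'' θ + c θ‖ := by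
    apply intervalIntegral.integral_mono_interval le_rfl ht.1 ht.2 _ hegint
    exact Filter.Eventually.of_forall fun x => by positivity
  rw [intervalIntegral.integral_const_mul] at h1
  have h3 : ∫ θ in (0:ℝ)..t, ‖c'' θ + c θ‖ ≤ 1 - 1 / Real.sqrt 2 :=
    le_of_mul_le_mul_left (h1.trans (h2.trans hint)) (Real.exp_pos _)
  have ks : ContinuousOn (fun θ : ℝ => Real.sin (t - θ)) (Set.Icc 0 π) := by fun_prop
  have kc : ContinuousOn (fun θ : ℝ => Real.cos (t - θ)) (Set.Icc 0 π) := by fun_prop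
  have hF : ∫ θ in (0:ℝ)..t, Real.sin (t - θ) • (c'' θ + c θ) =
      (Real.sin (t - t) • c' t + Real.cos (t - t) • c t) -
      (Real.sin (t - 0) • c' 0 + Real.cos (t - 0) • c 0) := by
    apply intervalIntegral.integral_eq_sub_of_hasDerivAt_of_le ht.1
      (f := fun θ => Real.sin (t - θ) • c' θ + Real.cos (t - θ) • c θ)
    · exact ((ks.smul hcc').add
        (kc.smul hcc)).mono hsub
    · intro x hx
      have hm : x ∈ Set.Icc (0:ℝ) π := hsub (Set.Ioo_subset_Icc_self hx)
      have hn : Set.Icc (0:ℝ) π ∈ nhds x := Icc_mem_nhds hx.1 (hx.2.trans_le ht.2)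
      have d1 := (hc' x hm).hasDerivAt hn
      have d2 := (hc'' x hm).hasDerivAt hn
      have ds := ((hasDerivAt_id x).const_sub t).sin
      have dc := ((hasDerivAt_id x).const_sub t).cos
      refine ((ds.smul d2).add (dc.smul d1)).congr_deriv ?_
      simp only [id]
      module
    · exact ((ks.smul (hcont.add hcc)).mono
        hsub).intervalIntegrable_of_Icc ht.1
  have hb : ‖∫ θ in (0:ℝ)..t, Real.sin (t - θ) • (c'' θ + c θ)‖ ≤
      ∫ θ in (0:ℝ)..t, ‖c'' θ + c θ‖ := by
    apply intervalIntegral.norm_integral_le_of_norm_le ht.1 _ hgint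
    refine Filter.Eventually.of_forall fun x _ => ?_
    rw [norm_smul]
    exact mul_le_of_le_one_left (norm_nonneg _) (Real.abs_sin_le_one _)
  simp only [sub_self, sub_zero, Real.sin_zero, Real.cos_zero, zero_smul, one_smul,
    zero_add] at hF
  rw [hF] at hb
  have hs : 0 < 1 / Real.sqrt 2 := by positivity
  have hi := real_inner_le_norm
    (c t - (Real.sin t • c' 0 + Real.cos t • c 0)) (c t)
  rw [hunit t ht, mul_one, inner_sub_left, real_inner_self_eq_norm_sq, hunit t ht] at hi
  rw [add_comm]
  linarith
end

section
/- Let L ≥ 1 be a real number with L^{−2} ≥ 1 − ((√2 − 1)/(2(e^π − 1)))², and let c : [0, π] → ℝⁿ be a twice continuously differentiable curve such that ‖c(t)‖ = 1, ‖ċ(t)‖ ≥ L^{−1}, and ‖c̈(t)‖² ≤ L^{−2} + ((√2 − 1)/(2(e^π − 1)))² for all t ∈ [0, π]. Then ∫₀^π e^{−t} ‖c̈(t) + c(t)‖ dt ≤ e^{−π} · (1 − 1/√2). -/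
open Real

theorem stmt_9 {n : ℕ} (L : ℝ) (hL : 1 ≤ L)
    (hL2 : L⁻¹ ^ 2 ≥ 1 - ((Real.sqrt 2 - 1) / (2 * (Real.exp π - 1))) ^ 2)
    (c c' c'' : ℝ → EuclideanSpace ℝ (Fin n))
    (hc' : ∀ t ∈ Set.Icc (0:ℝ) π, HasDerivWithinAt c (c' t) (Set.Icc 0 π) t)
    (hc'' : ∀ t ∈ Set.Icc (0:ℝ) π, HasDerivWithinAt c' (c'' t) (Set.Icc 0 π) t)
    (hcont : ContinuousOn c'' (Set.Icc 0 π))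
    (hunit : ∀ t ∈ Set.Icc (0:ℝ) π, ‖c t‖ = 1)
    (hd1 : ∀ t ∈ Set.Icc (0:ℝ) π, L⁻¹ ≤ ‖c' t‖)
    (hd2 : ∀ t ∈ Set.Icc (0:ℝ) π,
      ‖c'' t‖ ^ 2 ≤ L⁻¹ ^ 2 + ((Real.sqrt 2 - 1) / (2 * (Real.exp π - 1))) ^ 2) :
    ∫ t in (0:ℝ)..π, Real.exp (-t) * ‖c'' t + c t‖ ≤
      Real.exp (-π) * (1 - 1 / Real.sqrt 2) := by
  set K : Set ℝ := Set.Icc (0:ℝ) π with hK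
  set e : ℝ := (Real.sqrt 2 - 1) / (2 * (Real.exp π - 1)) with he
  have hU : UniqueDiffOn ℝ K := uniqueDiffOn_Icc Real.pi_pos
  have h1 : ∀ t ∈ K, inner ℝ (c t) (c' t) = 0 := by
    intro t ht
    have hA := (hc' t ht).inner ℝ (hc' t ht)
    have hB : HasDerivWithinAt (fun t => inner ℝ (c t) (c t)) (0:ℝ) K t := by
      refine (hasDerivWithinAt_const t K (1:ℝ)).congr ?_ ?_
      · intro x hx
        simp [real_inner_self_eq_norm_sq, hunit x hx]
      · simp [real_inner_self_eq_norm_sq, hunit t ht]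
    have := (hU t ht).eq_deriv _ hA hB
    rw [real_inner_comm (c t) (c' t)] at this
    linarith
  have h2 : ∀ t ∈ K, inner ℝ (c t) (c'' t) = - ‖c' t‖ ^ 2 := by
    intro t ht
    have hA := (hc' t ht).inner ℝ (hc'' t ht)
    have hB : HasDerivWithinAt (fun t => inner ℝ (c t) (c' t)) (0:ℝ) K t := by
      refine (hasDerivWithinAt_const t K (0:ℝ)).congr ?_ ?_
      · intro x hx
        exact h1 x hx
      · exact h1 t ht
    have := (hU t ht).eq_deriv _ hA hB
    rw [real_inner_self_eq_norm_sq] at this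
    linarith
  have hs2 : Real.sqrt 2 ^ 2 = 2 := Real.sq_sqrt (by norm_num)
  have hs1 : 1 < Real.sqrt 2 := by
    rw [Real.lt_sqrt] <;> norm_num
  have hE : 1 < Real.exp π := Real.one_lt_exp_iff.mpr Real.pi_pos
  have he0 : 0 ≤ e := div_nonneg (by linarith) (by linarith)
  have h3 : ∀ t ∈ K, ‖c'' t + c t‖ ≤ Real.sqrt 2 * e := by
    intro t ht
    apply le_of_sq_le_sq _ (by positivity)
    rw [norm_add_sq_real, hunit t ht, real_inner_comm, h2 t ht, mul_pow, hs2]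
    have hLi : 0 ≤ L⁻¹ := by positivity
    have := pow_le_pow_left₀ hLi (hd1 t ht) 2
    have := hd2 t ht
    linarith
  have hcc : ContinuousOn c K := fun t ht => (hc' t ht).continuousWithinAt
  have hint : IntervalIntegrable (fun t => Real.exp (-t) * ‖c'' t + c t‖)
      MeasureTheory.volume 0 π := by
    apply ContinuousOn.intervalIntegrable
    rw [Set.uIcc_of_le Real.pi_pos.le]
    exact (by fun_prop : Continuous fun t : ℝ => Real.exp (-t)).continuousOn.mul
      (hcont.add hcc).norm
  have hint2 : IntervalIntegrable (fun t => Real.exp (-t) * (Real.sqrt 2 * e))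
      MeasureTheory.volume 0 π :=
    Continuous.intervalIntegrable (by fun_prop) _ _
  have h4 := intervalIntegral.integral_mono_on Real.pi_pos.le hint hint2
    (fun t ht => mul_le_mul_of_nonneg_left (h3 t ht) (Real.exp_pos _).le)
  refine h4.trans (le_of_eq ?_)
  have h5 : ∫ t in (0:ℝ)..π, Real.exp (-t) = 1 - Real.exp (-π) := by
    rw [intervalIntegral.integral_comp_neg (fun x => Real.exp x), integral_exp]
    simp
  rw [intervalIntegral.integral_mul_const, h5, he, Real.exp_neg]
  have : Real.exp π - 1 ≠ 0 := by linarith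
  have : Real.sqrt 2 ≠ 0 := by linarith
  field_simp
  linear_combination (Real.sqrt 2 - 1) * hs2
end

section
/- Let E and F be real inner product spaces, let G be a set of continuous linear maps from E to F, and let σ be a function assigning to each unit vector u ∈ E a vector σ(u) ∈ F, such that ⟨A(u), σ(u)⟩ > 0 for every A ∈ G and every unit vector u ∈ E. Then every element B of the convex hull of G (taken in the space of continuous linear maps from E to F) is injective. -/
open scoped RealInnerProductSpace

theorem stmt_12 {E F : Type*} [NormedAddCommGroup E] [InnerProductSpace ℝ E]
    [NormedAddCommGroup F] [InnerProductSpace ℝ F]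
    (G : Set (E →L[ℝ] F)) (σ : E → F)
    (h : ∀ A ∈ G, ∀ u : E, ‖u‖ = 1 → 0 < ⟪A u, σ u⟫) :
    ∀ B ∈ convexHull ℝ G, Function.Injective (⇑B) := by
  intro B hB
  have key : ∀ u : E, ‖u‖ = 1 → 0 < ⟪B u, σ u⟫ := by
    intro u hu
    have hconv : Convex ℝ {A : E →L[ℝ] F | 0 < ⟪A u, σ u⟫} := by
      intro A hA C hC a b ha hb hab
      simp only [Set.mem_setOf_eq] at hA hC ⊢
      simp only [ContinuousLinearMap.add_apply, ContinuousLinearMap.smul_apply, inner_add_left,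
        real_inner_smul_left]
      rcases ha.eq_or_lt with h0 | h0
      · have hb1 : b = 1 := by linarith
        rw [← h0, hb1]
        linarith
      · have h1 := mul_pos h0 hA
        have h2 := mul_nonneg hb hC.le
        linarith
    exact convexHull_min (fun A hA => h A hA u hu) hconv hB
  rw [injective_iff_map_eq_zero]
  intro x hx
  by_contra hne
  have h1 := key (‖x‖⁻¹ • x) (norm_smul_inv_norm (𝕜 := ℝ) hne)
  rw [map_smul, hx, smul_zero, inner_zero_left] at h1
  exact lt_irrefl _ h1
end

section
/- Let L ≥ 1 and let σ : ℝⁿ → ℝⁿ be a map such that ‖σ(u)‖ = 1 for every unit vector u and L^{−1}‖u − v‖ ≤ ‖σ(u) − σ(v)‖ ≤ L‖u − v‖ for all unit vectors u, v. Define F̃ : ℝⁿ → ℝⁿ by F̃(v) := ‖v‖·σ(v/‖v‖) for v ≠ 0 and F̃(0) := 0. Then L^{−1}‖u − v‖ ≤ ‖F̃(u) − F̃(v)‖ ≤ L‖u − v‖ for all u, v ∈ ℝⁿ; that is, F̃ is bi-Lipschitz with the same bi-Lipschitz constant L. -/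
theorem aux_sq {E : Type*} [NormedAddCommGroup E] [InnerProductSpace ℝ E] (a b : E)
    (ha : ‖a‖ = 1) (hb : ‖b‖ = 1) (s t : ℝ) :
    ‖s • a - t • b‖ ^ 2 = (s - t) ^ 2 + s * t * ‖a - b‖ ^ 2 := by
  rw [norm_sub_sq_real, norm_sub_sq_real, norm_smul, norm_smul, inner_smul_left, inner_smul_right,
    ha, hb, mul_one, mul_one, Real.norm_eq_abs, Real.norm_eq_abs, sq_abs, sq_abs]
  simp only [conj_trivial]
  ring

theorem aux_le {E : Type*} [NormedAddCommGroup E] [InnerProductSpace ℝ E] (a b c d : E)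
    (ha : ‖a‖ = 1) (hb : ‖b‖ = 1) (hc : ‖c‖ = 1) (hd : ‖d‖ = 1) (s t L : ℝ)
    (hs : 0 ≤ s) (ht : 0 ≤ t) (hL : 1 ≤ L) (h : ‖a - b‖ ≤ L * ‖c - d‖) :
    ‖s • a - t • b‖ ≤ L * ‖s • c - t • d‖ := by
  refine (sq_le_sq₀ (by positivity) (by positivity)).1 ?_
  rw [mul_pow, aux_sq a b ha hb, aux_sq c d hc hd]
  have h1 : ‖a - b‖ ^ 2 ≤ (L * ‖c - d‖) ^ 2 := by gcongr
  have h2 := mul_le_mul_of_nonneg_left h1 (mul_nonneg hs ht)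
  have h3 : (s - t) ^ 2 ≤ L ^ 2 * (s - t) ^ 2 :=
    le_mul_of_one_le_left (sq_nonneg _) (one_le_pow₀ hL)
  nlinarith

theorem stmt_13 {n : ℕ} (L : ℝ) (hL : 1 ≤ L)
    (σ : EuclideanSpace ℝ (Fin n) → EuclideanSpace ℝ (Fin n))
    (hσ1 : ∀ u : EuclideanSpace ℝ (Fin n), ‖u‖ = 1 → ‖σ u‖ = 1)
    (hσ : ∀ u v : EuclideanSpace ℝ (Fin n), ‖u‖ = 1 → ‖v‖ = 1 →
      L⁻¹ * ‖u - v‖ ≤ ‖σ u - σ v‖ ∧ ‖σ u - σ v‖ ≤ L * ‖u - v‖)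
    (F : EuclideanSpace ℝ (Fin n) → EuclideanSpace ℝ (Fin n))
    (hF0 : F 0 = 0)
    (hF : ∀ v : EuclideanSpace ℝ (Fin n), v ≠ 0 → F v = ‖v‖ • σ (‖v‖⁻¹ • v)) :
    ∀ u v : EuclideanSpace ℝ (Fin n),
      L⁻¹ * ‖u - v‖ ≤ ‖F u - F v‖ ∧ ‖F u - F v‖ ≤ L * ‖u - v‖ := by
  have hL0 : 0 < L := by linarith
  have key : ∀ v : EuclideanSpace ℝ (Fin n), v ≠ 0 → ‖‖v‖⁻¹ • v‖ = 1 := by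
    intro v hv
    rw [norm_smul, norm_inv, norm_norm, inv_mul_cancel₀ (norm_ne_zero_iff.2 hv)]
  have hn : ∀ v : EuclideanSpace ℝ (Fin n), ‖F v‖ = ‖v‖ := by
    intro v
    by_cases hv : v = 0
    · rw [hv, hF0]
    · rw [hF v hv, norm_smul, hσ1 _ (key v hv), norm_norm, mul_one]
  intro u v
  rw [inv_mul_le_iff₀ hL0]
  by_cases hu : u = 0
  · subst hu
    rw [hF0, zero_sub, zero_sub, norm_neg, norm_neg, hn]
    exact ⟨le_mul_of_one_le_left (norm_nonneg _) hL, le_mul_of_one_le_left (norm_nonneg _) hL⟩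
  by_cases hv : v = 0
  · subst hv
    rw [hF0, sub_zero, sub_zero, hn]
    exact ⟨le_mul_of_one_le_left (norm_nonneg _) hL, le_mul_of_one_le_left (norm_nonneg _) hL⟩
  have hr : ∀ w : EuclideanSpace ℝ (Fin n), w ≠ 0 → ‖w‖ • (‖w‖⁻¹ • w) = w := fun w hw =>
    smul_inv_smul₀ (norm_ne_zero_iff.2 hw) w
  obtain ⟨h1, h2⟩ := hσ _ _ (key u hu) (key v hv)
  rw [inv_mul_le_iff₀ hL0] at h1
  have a1 := aux_le _ _ _ _ (key u hu) (key v hv) (hσ1 _ (key u hu)) (hσ1 _ (key v hv))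
    ‖u‖ ‖v‖ L (norm_nonneg _) (norm_nonneg _) hL h1
  have a2 := aux_le _ _ _ _ (hσ1 _ (key u hu)) (hσ1 _ (key v hv)) (key u hu) (key v hv)
    ‖u‖ ‖v‖ L (norm_nonneg _) (norm_nonneg _) hL h2
  rw [hr u hu, hr v hv, ← hF u hu, ← hF v hv] at a1 a2
  exact ⟨a1, a2⟩
end

section
/- Let M be a nonempty, connected, path-connected and locally path-connected topological space, and let F : M → M be a covering map that is homotopic to the identity map of M. Then F is injective; consequently F is a homeomorphism of M onto itself. -/
theorem stmt_18 {M : Type*} [TopologicalSpace M] [Nonempty M] [ConnectedSpace M]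
    [PathConnectedSpace M] [LocallyPathConnectedSpace M]
    (F : M → M) (hF : IsCoveringMap F) (hsurj : Function.Surjective F)
    (hhom : ContinuousMap.Homotopic ⟨F, hF.continuous⟩ (ContinuousMap.id M)) :
    Function.Injective F ∧ IsHomeomorph F := by
  -- Lift the homotopy through `F`, starting at the identity; its end is a section of `F`.
  obtain ⟨H⟩ := hhom
  have H0 : ∀ a, H.toContinuousMap (0, a) = F (ContinuousMap.id M a) := fun a => H.apply_zero a
  let G := hF.liftHomotopy H.toContinuousMap (ContinuousMap.id M) H0
  let S : M → M := fun a => G (1, a)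
  have hS : Continuous S := G.continuous.comp (Continuous.prodMk_right 1)
  have hFS : ∀ a, F (S a) = a := fun a =>
    (congr_fun (hF.liftHomotopy_lifts H.toContinuousMap (ContinuousMap.id M) H0) (1, a)).trans
      (H.apply_one a)
  -- `S ∘ F` and the identity are lifts of `F` which agree at a point of the image of `S`.
  obtain ⟨y⟩ := ‹Nonempty M›
  have hSF : S ∘ F = id :=
    hF.eq_of_comp_eq (hS.comp hF.continuous) continuous_id
      (funext fun a => hFS (F a)) (S y) (congrArg S (hFS y))
  have hinj : Function.Injective F :=
    Function.LeftInverse.injective (g := S) (congr_fun hSF)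
  exact ⟨hinj, hF.continuous, hF.isLocalHomeomorph.isOpenMap, hinj, hsurj⟩
end
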